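/- arXiv:2602.15417 — 3 statements merged into one kernel-verified Lean document; each statement's English description precedes it below -/
import Mathlib

section
/- Let n_1 ≥ n_2 ≥ n_3 ≥ n_4 ≥ 1 be integers. Then there exist positive integers a_1 < a_2 < a_3 < a_4 with a_4 ≤ 2·a_1 and (2n_2+1)(2n_3+1)(2n_4+1) ≤ a_1 ≤ a_4 ≤ 2·(2n_2+1)(2n_3+1)(2n_4+1), such that the map (k_1,k_2,k_3,k_4) ↦ k_1·a_1 + k_2·a_2 + k_3·a_3 + k_4·a_4 is injective on the set of integer tuples with |k_i| ≤ n_i for all i ∈ {1,2,3,4}; equivalently, the integers k_1·a_1 + k_2·a_2 + k_3·a_3 + k_4·a_4 over such tuples are pairwise distinct. -/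
/-!
Write `Mᵢ = 2nᵢ + 1` and take `a₁ = M₂M₃M₄`, `a₂ = a₁ + M₃M₄`, `a₃ = a₂ + M₄`, `a₄ = a₃ + 1`.
If two admissible tuples have the same image and `dᵢ = kᵢ - kᵢ'`, then
`M₂M₃M₄(d₁+d₂+d₃+d₄) + M₃M₄(d₂+d₃+d₄) + M₄(d₃+d₄) + d₄ = 0`.
Since `|dᵢ| ≤ 2nᵢ < Mᵢ`, reduction modulo `M₄` gives `d₄ = 0`; after division by `M₄`, reduction
modulo `M₃` gives `d₃ = 0`, and likewise `d₂ = 0`, which leaves `M₂ d₁ = 0`.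
-/

/-- Integers in `[-n, n]` are determined by their residue modulo `2n + 1`. -/
lemma eq_of_abs_le_of_dvd {n : ℕ} {k k' : ℤ} (hk : |k| ≤ n) (hk' : |k'| ≤ n)
    (h : (2 * n + 1 : ℤ) ∣ k - k') : k = k' := by
  rw [abs_le] at hk hk'
  have hlt : |k - k'| < 2 * n + 1 := by
    rw [abs_lt]
    constructor <;> linarith
  exact sub_eq_zero.mp (Int.eq_zero_of_abs_lt_dvd h hlt)

theorem four_numbers_distinct_combinations
    (n₁ n₂ n₃ n₄ : ℕ) (h12 : n₂ ≤ n₁) (h23 : n₃ ≤ n₂) (h34 : n₄ ≤ n₃) (h4 : 1 ≤ n₄) :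
    ∃ a₁ a₂ a₃ a₄ : ℕ,
      0 < a₁ ∧ a₁ < a₂ ∧ a₂ < a₃ ∧ a₃ < a₄ ∧ a₄ ≤ 2 * a₁ ∧
      (2 * n₂ + 1) * (2 * n₃ + 1) * (2 * n₄ + 1) ≤ a₁ ∧
      a₄ ≤ 2 * ((2 * n₂ + 1) * (2 * n₃ + 1) * (2 * n₄ + 1)) ∧
      ∀ k₁ k₂ k₃ k₄ k₁' k₂' k₃' k₄' : ℤ,
        |k₁| ≤ (n₁ : ℤ) → |k₂| ≤ (n₂ : ℤ) → |k₃| ≤ (n₃ : ℤ) → |k₄| ≤ (n₄ : ℤ) →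
        |k₁'| ≤ (n₁ : ℤ) → |k₂'| ≤ (n₂ : ℤ) → |k₃'| ≤ (n₃ : ℤ) → |k₄'| ≤ (n₄ : ℤ) →
        k₁ * (a₁ : ℤ) + k₂ * (a₂ : ℤ) + k₃ * (a₃ : ℤ) + k₄ * (a₄ : ℤ) =
          k₁' * (a₁ : ℤ) + k₂' * (a₂ : ℤ) + k₃' * (a₃ : ℤ) + k₄' * (a₄ : ℤ) →
        k₁ = k₁' ∧ k₂ = k₂' ∧ k₃ = k₃' ∧ k₄ = k₄' := by
  have hM : 3 ≤ 2 * n₄ + 1 ∧ 3 ≤ 2 * n₃ + 1 ∧ 3 ≤ 2 * n₂ + 1 := by omega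
  obtain ⟨hM4, hM3, hM2⟩ := hM
  have hle : (2 * n₃ + 1) * (2 * n₄ + 1) + (2 * n₄ + 1) + 1
      ≤ (2 * n₂ + 1) * (2 * n₃ + 1) * (2 * n₄ + 1) := by
    have e1 : 3 * (2 * n₄ + 1) ≤ (2 * n₃ + 1) * (2 * n₄ + 1) := Nat.mul_le_mul_right _ hM3
    have e2 : 3 * ((2 * n₃ + 1) * (2 * n₄ + 1))
        ≤ (2 * n₂ + 1) * ((2 * n₃ + 1) * (2 * n₄ + 1)) := Nat.mul_le_mul_right _ hM2
    rw [← mul_assoc (2 * n₂ + 1)] at e2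
    linarith
  have hpos : 0 < (2 * n₃ + 1) * (2 * n₄ + 1) := by positivity
  refine ⟨(2 * n₂ + 1) * (2 * n₃ + 1) * (2 * n₄ + 1),
    (2 * n₂ + 1) * (2 * n₃ + 1) * (2 * n₄ + 1) + (2 * n₃ + 1) * (2 * n₄ + 1),
    (2 * n₂ + 1) * (2 * n₃ + 1) * (2 * n₄ + 1) + (2 * n₃ + 1) * (2 * n₄ + 1) + (2 * n₄ + 1),
    (2 * n₂ + 1) * (2 * n₃ + 1) * (2 * n₄ + 1) + (2 * n₃ + 1) * (2 * n₄ + 1) + (2 * n₄ + 1) + 1,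
    by positivity, by linarith, by linarith, by linarith, by linarith, le_rfl, by linarith, ?_⟩
  intro k₁ k₂ k₃ k₄ k₁' k₂' k₃' k₄' _ b2 b3 b4 _ c2 c3 c4 h
  push_cast at h
  have p4 : (2 * n₄ + 1 : ℤ) ≠ 0 := by positivity
  have p3 : (2 * n₃ + 1 : ℤ) ≠ 0 := by positivity
  have p2 : (2 * n₂ + 1 : ℤ) ≠ 0 := by positivity
  obtain rfl : k₄ = k₄' := eq_of_abs_le_of_dvd b4 c4
    ⟨-((2 * n₂ + 1) * (2 * n₃ + 1) * ((k₁ - k₁') + (k₂ - k₂') + (k₃ - k₃') + (k₄ - k₄'))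
      + (2 * n₃ + 1) * ((k₂ - k₂') + (k₃ - k₃') + (k₄ - k₄')) + ((k₃ - k₃') + (k₄ - k₄'))),
      by linear_combination h⟩
  obtain rfl : k₃ = k₃' := eq_of_abs_le_of_dvd b3 c3
    ⟨-((2 * n₂ + 1) * ((k₁ - k₁') + (k₂ - k₂') + (k₃ - k₃')) + ((k₂ - k₂') + (k₃ - k₃'))),
      mul_left_cancel₀ p4 (by linear_combination h)⟩
  obtain rfl : k₂ = k₂' := eq_of_abs_le_of_dvd b2 c2
    ⟨-((k₁ - k₁') + (k₂ - k₂')),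
      mul_left_cancel₀ (mul_ne_zero p3 p4) (by linear_combination h)⟩
  exact ⟨mul_left_cancel₀ (mul_ne_zero p2 (mul_ne_zero p3 p4)) (by linear_combination h),
    rfl, rfl, rfl⟩
end

section
/- Let X be any sub-multiset of the size profile S_{i,j} (where 0 ≤ i ≤ P and 0 ≤ j ≤ Q). Then there exists a unique tuple (k_1,k_2,k_3,k_4) with k_1 ∈ ℤ ∩ [0,2P], k_2 ∈ ℤ ∩ [−3P,3P], k_3 ∈ ℤ ∩ [0,2Q], and k_4 ∈ {0,1}, such that the sum of the elements of X equals k_1·a + k_2·b + k_3·c + k_4·d. Moreover, k_4 = 1 if and only if X contains the finger size f of S_{i,j}. -/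
/-!
A sub-multiset `X` of `S_{i,j}` with multiplicities `x, y, z, e` of `a, b, c, f` has sum
`x a + y b + z c + e f`, and `f = (P - i) a - h b + (Q - j) c + d`. Substituting gives the
coefficients `(x + e (P - i), y - e h, z + e (Q - j), e)`, which lie in the required ranges
because `h ≤ 3P`. Uniqueness is the distinctness hypothesis, so the last coefficient is always
`e`, the multiplicity of the finger in `X`; it is `0` or `1` as `f ≥ d > c > b > a`.
-/

/-!
Size profiles: fix `P > Q ≥ 1` and positive integers `a < b < c < d` with `d ≤ 2a`
such that the combinations `k₁a + k₂b + k₃c + k₄d` (`k₁, k₂ ∈ [−3P, 3P]`,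
`k₃ ∈ [0, 2Q]`, `k₄ ∈ {0, 1}`) are pairwise distinct. With `M = P·a + Q·c + d`,
the size profile `S_{i,j}` consists of `i` copies of `a`, `j` copies of `c`,
`h = ⌊(M − d − i·a − j·c)/b⌋` copies of `b`, and the finger size
`f = M − i·a − j·c − h·b`.

Statement: any sub-multiset `X ≤ S_{i,j}` has its sum uniquely representable as
`k₁a + k₂b + k₃c + k₄d` with `k₁ ∈ [0, 2P]`, `k₂ ∈ [−3P, 3P]`, `k₃ ∈ [0, 2Q]`,
`k₄ ∈ {0, 1}`; moreover `k₄ = 1` iff `X` contains the finger size.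
-/

/-- Total memory size `M = P·a + Q·c + d`. -/
def Mtot (a c d P Q : ℕ) : ℕ := P * a + Q * c + d

/-- Number of size-`b` objects in `S_{i,j}`. -/
def hcnt (a b c d P Q i j : ℕ) : ℕ := (Mtot a c d P Q - d - i * a - j * c) / b

/-- The finger size of `S_{i,j}`. -/
def fingerSize (a b c d P Q i j : ℕ) : ℕ :=
  Mtot a c d P Q - i * a - j * c - hcnt a b c d P Q i j * b

/-- The size profile `S_{i,j}`. -/
def Sprof (a b c d P Q i j : ℕ) : Multiset ℕ :=
  Multiset.replicate i a + Multiset.replicate j c +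
    Multiset.replicate (hcnt a b c d P Q i j) b + {fingerSize a b c d P Q i j}

/-- The combinations `k₁a + k₂b + k₃c + k₄d` over the prescribed ranges are
pairwise distinct. -/
def DistinctCombos (a b c d P Q : ℕ) : Prop :=
  ∀ k₁ k₂ k₃ k₄ k₁' k₂' k₃' k₄' : ℤ,
    -(3 * (P : ℤ)) ≤ k₁ → k₁ ≤ 3 * P → -(3 * (P : ℤ)) ≤ k₂ → k₂ ≤ 3 * P →
    0 ≤ k₃ → k₃ ≤ 2 * Q → (k₄ = 0 ∨ k₄ = 1) →
    -(3 * (P : ℤ)) ≤ k₁' → k₁' ≤ 3 * P → -(3 * (P : ℤ)) ≤ k₂' → k₂' ≤ 3 * P →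
    0 ≤ k₃' → k₃' ≤ 2 * Q → (k₄' = 0 ∨ k₄' = 1) →
    k₁ * a + k₂ * b + k₃ * c + k₄ * d = k₁' * a + k₂' * b + k₃' * c + k₄' * d →
    k₁ = k₁' ∧ k₂ = k₂' ∧ k₃ = k₃' ∧ k₄ = k₄'

/-- The finger size completes the profile to total `M`; no subtraction in the definitions
truncates when `i ≤ P` and `j ≤ Q`. -/
lemma fingerSize_spec (a b c d P Q i j : ℕ) (hi : i ≤ P) (hj : j ≤ Q) :
    fingerSize a b c d P Q i j + i * a + j * c + hcnt a b c d P Q i j * b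
      = P * a + Q * c + d ∧ d ≤ fingerSize a b c d P Q i j := by
  have h1 : i * a ≤ P * a := Nat.mul_le_mul_right a hi
  have h2 : j * c ≤ Q * c := Nat.mul_le_mul_right c hj
  have h3 : hcnt a b c d P Q i j * b ≤ Mtot a c d P Q - d - i * a - j * c :=
    Nat.div_mul_le_self _ _
  unfold fingerSize
  unfold Mtot at *
  omega

/-- Since `a < b` and `c ≤ 2b`, the `b`-objects number at most `P + 2Q ≤ 3P`. -/
lemma hcnt_le (a b c d P Q i j : ℕ) (hQP : Q < P) (hab : a < b) (hc : c ≤ 2 * b)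
    (hi : i ≤ P) (hj : j ≤ Q) : hcnt a b c d P Q i j ≤ 3 * P := by
  obtain ⟨h1, h2⟩ := fingerSize_spec a b c d P Q i j hi hj
  have h3 : hcnt a b c d P Q i j * b ≤ 3 * P * b := by nlinarith
  exact Nat.le_of_mul_le_mul_right h3 (by omega)

/-- A sub-multiset of `S_{i,j}` is described by its multiplicities; `d ≤ f` keeps the finger
apart from `a, b, c`, so it occurs at most once. -/
lemma sum_of_le_Sprof (a b c d P Q i j : ℕ) (hab : a < b) (hbc : b < c) (hcd : c < d)
    (hi : i ≤ P) (hj : j ≤ Q) (X : Multiset ℕ) (hX : X ≤ Sprof a b c d P Q i j) :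
    X.count a ≤ i ∧ X.count b ≤ hcnt a b c d P Q i j ∧ X.count c ≤ j ∧
      X.count (fingerSize a b c d P Q i j) ≤ 1 ∧
      X.sum = X.count a * a + X.count b * b + X.count c * c +
        X.count (fingerSize a b c d P Q i j) * fingerSize a b c d P Q i j := by
  have hf := (fingerSize_spec a b c d P Q i j hi hj).2
  unfold Sprof at hX
  generalize fingerSize a b c d P Q i j = f at *
  generalize hcnt a b c d P Q i j = h at *
  have hle := fun n => Multiset.count_le_of_le n hX
  simp only [Multiset.count_add, Multiset.count_replicate, Multiset.count_singleton] at hle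
  refine ⟨?_, ?_, ?_, ?_, ?_⟩
  · have := hle a; grind
  · have := hle b; grind
  · have := hle c; grind
  · have := hle f; grind
  · have hsub : X.toFinset ⊆ ({a, b, c, f} : Finset ℕ) := by
      intro n hn
      have := Multiset.mem_of_le hX (Multiset.mem_toFinset.1 hn)
      simp only [Multiset.mem_add, Multiset.mem_replicate, Multiset.mem_singleton] at this
      simp only [Finset.mem_insert, Finset.mem_singleton]
      tauto
    rw [Finset.sum_multiset_count_of_subset X _ hsub, Finset.sum_insert, Finset.sum_insert,
      Finset.sum_insert, Finset.sum_singleton]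
    · simp only [smul_eq_mul]; ring
    all_goals simp only [Finset.mem_insert, Finset.mem_singleton]; omega

theorem subset_sum_unique_representation
    (P Q a b c d : ℕ) (hQ : 1 ≤ Q) (hQP : Q < P)
    (ha : 0 < a) (hab : a < b) (hbc : b < c) (hcd : c < d) (hd : d ≤ 2 * a)
    (hdist : DistinctCombos a b c d P Q)
    (i j : ℕ) (hi : i ≤ P) (hj : j ≤ Q)
    (X : Multiset ℕ) (hX : X ≤ Sprof a b c d P Q i j) :
    (∃! t : ℤ × ℤ × ℤ × ℤ,
      (0 ≤ t.1 ∧ t.1 ≤ 2 * P ∧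
        -(3 * (P : ℤ)) ≤ t.2.1 ∧ t.2.1 ≤ 3 * P ∧
        0 ≤ t.2.2.1 ∧ t.2.2.1 ≤ 2 * Q ∧
        (t.2.2.2 = 0 ∨ t.2.2.2 = 1)) ∧
      (X.sum : ℤ) = t.1 * a + t.2.1 * b + t.2.2.1 * c + t.2.2.2 * d) ∧
    (∀ t : ℤ × ℤ × ℤ × ℤ,
      ((0 ≤ t.1 ∧ t.1 ≤ 2 * P ∧
        -(3 * (P : ℤ)) ≤ t.2.1 ∧ t.2.1 ≤ 3 * P ∧
        0 ≤ t.2.2.1 ∧ t.2.2.1 ≤ 2 * Q ∧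
        (t.2.2.2 = 0 ∨ t.2.2.2 = 1)) ∧
      (X.sum : ℤ) = t.1 * a + t.2.1 * b + t.2.2.1 * c + t.2.2.2 * d) →
      (t.2.2.2 = 1 ↔ fingerSize a b c d P Q i j ∈ X)) := by
  obtain ⟨hxa, hxb, hxc, hxf, hsum⟩ :=
    sum_of_le_Sprof a b c d P Q i j hab hbc hcd hi hj X hX
  have hf := (fingerSize_spec a b c d P Q i j hi hj).1
  have hh := hcnt_le a b c d P Q i j hQP hab (by omega) hi hj
  rw [← Multiset.one_le_count_iff_mem]
  generalize fingerSize a b c d P Q i j = f at *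
  generalize hcnt a b c d P Q i j = h at *
  generalize X.count a = x at *
  generalize X.count b = y at *
  generalize X.count c = z at *
  generalize X.count f = e at *
  -- Substituting `f = (P - i) a - h b + (Q - j) c + d` gives the coefficients.
  obtain ⟨k₁, k₂, k₃, l₁, u₁, l₂, u₂, l₃, u₃, hk⟩ : ∃ k₁ k₂ k₃ : ℤ,
      0 ≤ k₁ ∧ k₁ ≤ 2 * P ∧ -(3 * (P : ℤ)) ≤ k₂ ∧ k₂ ≤ 3 * P ∧ 0 ≤ k₃ ∧ k₃ ≤ 2 * Q ∧
        (X.sum : ℤ) = k₁ * a + k₂ * b + k₃ * c + (e : ℤ) * d := by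
    refine ⟨x + e * (P - i), y - e * h, z + e * (Q - j), ?_⟩
    have hs : (X.sum : ℤ) = x * a + y * b + z * c + e * f := by exact_mod_cast hsum
    have hf' : (f : ℤ) + i * a + j * c + h * b = P * a + Q * c + d := by exact_mod_cast hf
    have he : e = 0 ∨ e = 1 := by omega
    refine ⟨?_, ?_, ?_, ?_, ?_, ?_, by rw [hs]; linear_combination (e : ℤ) * hf'⟩ <;>
      rcases he with rfl | rfl <;> push_cast <;> omega
  have he : (e : ℤ) = 0 ∨ (e : ℤ) = 1 := by omega
  have key : ∀ t : ℤ × ℤ × ℤ × ℤ,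
      ((0 ≤ t.1 ∧ t.1 ≤ 2 * P ∧
        -(3 * (P : ℤ)) ≤ t.2.1 ∧ t.2.1 ≤ 3 * P ∧
        0 ≤ t.2.2.1 ∧ t.2.2.1 ≤ 2 * Q ∧
        (t.2.2.2 = 0 ∨ t.2.2.2 = 1)) ∧
      (X.sum : ℤ) = t.1 * a + t.2.1 * b + t.2.2.1 * c + t.2.2.2 * d) →
      t = (k₁, k₂, k₃, (e : ℤ)) := by
    rintro ⟨t₁, t₂, t₃, t₄⟩ ⟨⟨h1, h2, h3, h4, h5, h6, h7⟩, h8⟩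
    dsimp only at *
    obtain ⟨rfl, rfl, rfl, rfl⟩ := hdist t₁ t₂ t₃ t₄ k₁ k₂ k₃ e (by omega) (by omega) h3 h4
      h5 h6 h7 (by omega) (by omega) l₂ u₂ l₃ u₃ he (h8.symm.trans hk)
    rfl
  refine ⟨⟨(k₁, k₂, k₃, (e : ℤ)), ⟨⟨l₁, u₁, l₂, u₂, l₃, u₃, he⟩, hk⟩, key⟩, ?_⟩
  intro t ht
  rw [key t ht]
  dsimp only
  omega
end

section
/- For all integers 0 ≤ i ≤ P and 1 ≤ j ≤ Q, the difference between consecutive size profiles satisfies δ(S_{i,j}, S_{i,j−1}) ≤ 5; and for all integers 1 ≤ i ≤ P, δ(S_{i,Q}, S_{i−1,Q}) ≤ 5. -/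
/-- The difference `δ(S₁, S₂) = ∑_x |m_{S₁}(x) − m_{S₂}(x)|` between two multisets,
expressed via truncated multiset subtraction. -/
def mdiff (S₁ S₂ : Multiset ℕ) : ℕ := Multiset.card (S₁ - S₂) + Multiset.card (S₂ - S₁)

/-- A common part does not contribute to the difference. -/
theorem mdiff_add_left_le (T U V : Multiset ℕ) :
    mdiff (T + U) (T + V) ≤ Multiset.card U + Multiset.card V := by
  unfold mdiff
  rw [add_tsub_add_eq_tsub_left, add_tsub_add_eq_tsub_left]
  exact Nat.add_le_add (Multiset.card_le_card (Multiset.sub_le_self U V))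
    (Multiset.card_le_card (Multiset.sub_le_self V U))

/-- Increasing the numerator by at most `2b` raises the floor quotient by at most two. -/
theorem exists_div_eq_add {b x y : ℕ} (hb : 0 < b) (hxy : x ≤ y) (hy : y ≤ x + 2 * b) :
    ∃ k ≤ 2, y / b = x / b + k := by
  have h1 : x / b ≤ y / b := Nat.div_le_div_right hxy
  have h2 : y / b ≤ x / b + 2 := by
    calc y / b ≤ (x + 2 * b) / b := Nat.div_le_div_right hy
      _ = x / b + 2 := Nat.add_mul_div_right x 2 hb
  exact ⟨y / b - x / b, by omega, by omega⟩

theorem consecutive_size_profiles_close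
    (P Q a b c d : ℕ) (hQ : 1 ≤ Q) (hQP : Q < P)
    (ha : 0 < a) (hab : a < b) (hbc : b < c) (hcd : c < d) (hd : d ≤ 2 * a)
    (hdist : DistinctCombos a b c d P Q) :
    (∀ i j : ℕ, i ≤ P → 1 ≤ j → j ≤ Q →
      mdiff (Sprof a b c d P Q i j) (Sprof a b c d P Q i (j - 1)) ≤ 5) ∧
    (∀ i : ℕ, 1 ≤ i → i ≤ P →
      mdiff (Sprof a b c d P Q i Q) (Sprof a b c d P Q (i - 1) Q) ≤ 5) := by
  have hb : 0 < b := by omega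
  constructor
  · intro i j hi hj hjQ
    obtain ⟨j, rfl⟩ : ∃ n, j = n + 1 := ⟨j - 1, by omega⟩
    rw [Nat.add_sub_cancel]
    obtain ⟨k, hk, hh⟩ : ∃ k ≤ 2,
        hcnt a b c d P Q i j = hcnt a b c d P Q i (j + 1) + k := by
      unfold hcnt
      have e : (j + 1) * c = j * c + c := by ring
      exact exists_div_eq_add hb (by omega) (by omega)
    have hS : Sprof a b c d P Q i (j + 1) =
        (Multiset.replicate i a + Multiset.replicate j c +
          Multiset.replicate (hcnt a b c d P Q i (j + 1)) b) +
        ({c} + {fingerSize a b c d P Q i (j + 1)}) := by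
      rw [Sprof, Multiset.replicate_add, Multiset.replicate_one]
      abel
    have hS' : Sprof a b c d P Q i j =
        (Multiset.replicate i a + Multiset.replicate j c +
          Multiset.replicate (hcnt a b c d P Q i (j + 1)) b) +
        (Multiset.replicate k b + {fingerSize a b c d P Q i j}) := by
      rw [Sprof, hh, Multiset.replicate_add]
      abel
    rw [hS, hS']
    refine (mdiff_add_left_le _ _ _).trans ?_
    simp only [Multiset.card_add, Multiset.card_singleton, Multiset.card_replicate]
    omega
  · intro i hi hiP
    obtain ⟨i, rfl⟩ : ∃ n, i = n + 1 := ⟨i - 1, by omega⟩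
    rw [Nat.add_sub_cancel]
    obtain ⟨k, hk, hh⟩ : ∃ k ≤ 2,
        hcnt a b c d P Q i Q = hcnt a b c d P Q (i + 1) Q + k := by
      unfold hcnt
      have e : (i + 1) * a = i * a + a := by ring
      exact exists_div_eq_add hb (by omega) (by omega)
    have hS : Sprof a b c d P Q (i + 1) Q =
        (Multiset.replicate i a + Multiset.replicate Q c +
          Multiset.replicate (hcnt a b c d P Q (i + 1) Q) b) +
        ({a} + {fingerSize a b c d P Q (i + 1) Q}) := by
      rw [Sprof, Multiset.replicate_add, Multiset.replicate_one]
      abel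
    have hS' : Sprof a b c d P Q i Q =
        (Multiset.replicate i a + Multiset.replicate Q c +
          Multiset.replicate (hcnt a b c d P Q (i + 1) Q) b) +
        (Multiset.replicate k b + {fingerSize a b c d P Q i Q}) := by
      rw [Sprof, hh, Multiset.replicate_add]
      abel
    rw [hS, hS']
    refine (mdiff_add_left_le _ _ _).trans ?_
    simp only [Multiset.card_add, Multiset.card_singleton, Multiset.card_replicate]
    omega
end
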